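/- Every 2-coloring of the Boolean lattice Q_5 in which both the empty set and the full ground set [5] are colored blue contains a red copy of Q_2 or a blue copy of Q_3. -/

import Mathlib

/-- A red copy of the Boolean lattice `Q m` inside the 2-colored Boolean lattice `Q N`,
where `c S = true` means `S` is red and `c S = false` means `S` is blue. -/
def HasRedCopy (m N : ℕ) (c : Finset (Fin N) → Bool) : Prop :=
  ∃ f : Finset (Fin m) → Finset (Fin N),
    Function.Injective f ∧
    (∀ S T : Finset (Fin m), S ⊆ T ↔ f S ⊆ f T) ∧
    (∀ S : Finset (Fin m), c (f S) = true)

/-- A blue copy of the Boolean lattice `Q m` inside the 2-colored Boolean lattice `Q N`. -/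
def HasBlueCopy (m N : ℕ) (c : Finset (Fin N) → Bool) : Prop :=
  ∃ f : Finset (Fin m) → Finset (Fin N),
    Function.Injective f ∧
    (∀ S T : Finset (Fin m), S ⊆ T ↔ f S ⊆ f T) ∧
    (∀ S : Finset (Fin m), c (f S) = false)

/-!
Proof by reflection.  Subsets of `Fin 5` are encoded as numbers below 32 (bit masks).
Since `∅` and `univ` are blue, a blue `Q_3` is obtained from a blue crown of six sets.
A decision tree branches on the colors of sets; each leaf exhibits a red `Q_2` or a blue crown.
The tree is verified by the kernel.
-/

namespace BoolRamsey

/-- Sufficient condition for a red `Q_2`. -/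
theorem red_of {c : Finset (Fin 5) → Bool} {A B C D : Finset (Fin 5)}
    (hA : c A = true) (hB : c B = true) (hC : c C = true) (hD : c D = true)
    (h1 : A ⊆ B) (h2 : A ⊆ C) (h3 : B ⊆ D) (h4 : C ⊆ D) (h5 : ¬ B ⊆ C) (h6 : ¬ C ⊆ B) :
    HasRedCopy 2 5 c := by
  have hAD : A ⊆ D := h1.trans h3
  have e1 : ¬ B ⊆ A := fun h => h5 (h.trans h2)
  have e2 : ¬ C ⊆ A := fun h => h6 (h.trans h1)
  have e3 : ¬ D ⊆ B := fun h => h6 (h4.trans h)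
  have e4 : ¬ D ⊆ C := fun h => h5 (h3.trans h)
  have e5 : ¬ D ⊆ A := fun h => e1 (h3.trans h)
  let g : Bool → Bool → Finset (Fin 5) := fun x y =>
    match x, y with
    | false, false => A
    | true, false => B
    | false, true => C
    | true, true => D
  have hg : ∀ x y x' y', g x y ⊆ g x' y' ↔ ((x = true → x' = true) ∧ (y = true → y' = true)) := by
    intro x y x' y'
    cases x <;> cases y <;> cases x' <;> cases y' <;> simp [g, *]
  have hs : ∀ S T : Finset (Fin 2), S ⊆ T ↔ ((0 ∈ S → 0 ∈ T) ∧ (1 ∈ S → 1 ∈ T)) := by decide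
  have hsub : ∀ S T : Finset (Fin 2), S ⊆ T ↔
      g (decide (0 ∈ S)) (decide (1 ∈ S)) ⊆ g (decide (0 ∈ T)) (decide (1 ∈ T)) := by
    intro S T
    rw [hg, hs]; simp
  refine ⟨fun S => g (decide (0 ∈ S)) (decide (1 ∈ S)), ?_, hsub, ?_⟩
  · intro S T h
    have h : g (decide (0 ∈ S)) (decide (1 ∈ S)) = g (decide (0 ∈ T)) (decide (1 ∈ T)) := h
    exact Finset.Subset.antisymm ((hsub S T).2 h.subset) ((hsub T S).2 h.symm.subset)
  · intro S
    have : ∀ x y, c (g x y) = true := by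
      intro x y
      cases x <;> cases y <;> simp [g, *]
    exact this _ _

/-- Sufficient condition for a blue `Q_3` when the bottom and the top are blue. -/
theorem blue_of {c : Finset (Fin 5) → Bool} {X Y Z P Q R : Finset (Fin 5)}
    (hbot : c ∅ = false) (htop : c Finset.univ = false)
    (hX : c X = false) (hY : c Y = false) (hZ : c Z = false)
    (hP : c P = false) (hQ : c Q = false) (hR : c R = false)
    (h1 : X ⊆ P) (h2 : Y ⊆ P) (h3 : ¬ Z ⊆ P) (h4 : X ⊆ Q) (h5 : ¬ Y ⊆ Q) (h6 : Z ⊆ Q)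
    (h7 : ¬ X ⊆ R) (h8 : Y ⊆ R) (h9 : Z ⊆ R)
    (i1 : ¬ X ⊆ Y) (i2 : ¬ X ⊆ Z) (i3 : ¬ Y ⊆ X) (i4 : ¬ Y ⊆ Z) (i5 : ¬ Z ⊆ X) (i6 : ¬ Z ⊆ Y)
    (j1 : ¬ P ⊆ Q) (j2 : ¬ P ⊆ R) (j3 : ¬ Q ⊆ P) (j4 : ¬ Q ⊆ R) (j5 : ¬ R ⊆ P) (j6 : ¬ R ⊆ Q) :
    HasBlueCopy 3 5 c := by
  have k1 : ¬ P ⊆ X := fun h => j1 (h.trans h4)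
  have k2 : ¬ P ⊆ Y := fun h => j2 (h.trans h8)
  have k3 : ¬ P ⊆ Z := fun h => j1 (h.trans h6)
  have k4 : ¬ Q ⊆ X := fun h => j3 (h.trans h1)
  have k5 : ¬ Q ⊆ Y := fun h => j3 (h.trans h2)
  have k6 : ¬ Q ⊆ Z := fun h => j4 (h.trans h9)
  have k7 : ¬ R ⊆ X := fun h => j5 (h.trans h1)
  have k8 : ¬ R ⊆ Y := fun h => j5 (h.trans h2)
  have k9 : ¬ R ⊆ Z := fun h => j6 (h.trans h6)
  have ne : ∀ {U V : Finset (Fin 5)}, ¬ U ⊆ V → U ≠ ∅ := by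
    intro U V h e; exact h (e ▸ Finset.empty_subset V)
  have nu : ∀ {U V : Finset (Fin 5)}, ¬ U ⊆ V → V ≠ Finset.univ := by
    intro U V h e; exact h (e ▸ Finset.subset_univ U)
  have n1 := ne i1
  have n2 := ne i3
  have n3 := ne i5
  have n4 := ne j1
  have n5 := ne j3
  have n6 := ne j5
  have u1 := nu i3
  have u2 := nu i1
  have u3 := nu i2
  have u4 := nu j3
  have u5 := nu j1
  have u6 := nu j2
  have uu : (Finset.univ : Finset (Fin 5)) ≠ ∅ := by decide
  let g : Bool → Bool → Bool → Finset (Fin 5) := fun x y z =>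
    match x, y, z with
    | false, false, false => ∅
    | true, false, false => X
    | false, true, false => Y
    | false, false, true => Z
    | true, true, false => P
    | true, false, true => Q
    | false, true, true => R
    | true, true, true => Finset.univ
  have hg : ∀ x y z x' y' z', g x y z ⊆ g x' y' z' ↔
      ((x = true → x' = true) ∧ (y = true → y' = true) ∧ (z = true → z' = true)) := by
    intro x y z x' y' z'
    cases x <;> cases y <;> cases z <;> cases x' <;> cases y' <;> cases z' <;>
      simp [g, Finset.subset_empty, Finset.univ_subset_iff, *]
  have hs : ∀ S T : Finset (Fin 3), S ⊆ T ↔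
      ((0 ∈ S → 0 ∈ T) ∧ (1 ∈ S → 1 ∈ T) ∧ (2 ∈ S → 2 ∈ T)) := by decide
  let f : Finset (Fin 3) → Finset (Fin 5) :=
    fun S => g (decide (0 ∈ S)) (decide (1 ∈ S)) (decide (2 ∈ S))
  have hsub : ∀ S T : Finset (Fin 3), S ⊆ T ↔ f S ⊆ f T := by
    intro S T
    simp only [f]
    rw [hg, hs]; simp
  refine ⟨f, ?_, hsub, ?_⟩
  · intro S T h
    exact Finset.Subset.antisymm ((hsub S T).2 h.subset) ((hsub T S).2 h.symm.subset)
  · intro S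
    have : ∀ x y z, c (g x y z) = false := by
      intro x y z
      cases x <;> cases y <;> cases z <;> simp [g, *]
    exact this _ _ _

/-- The subset of `Fin 5` with a given bit mask. -/
def toF (m : ℕ) : Finset (Fin 5) := Finset.univ.filter fun i => m.testBit i.val = true

/-- Mask inclusion. -/
def sub (a b : ℕ) : Bool := Nat.beq (Nat.land a b) a

/-- Is the mask below 32? -/
def ok (a : ℕ) : Bool := Nat.ble a 31

theorem sub_iff_aux : ∀ a < 32, ∀ b < 32, sub a b = decide (toF a ⊆ toF b) := by
  decide +kernel

theorem sub_iff {a b : ℕ} (ha : ok a = true) (hb : ok b = true) :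
    sub a b = true ↔ toF a ⊆ toF b := by
  have ha' : a ≤ 31 := Nat.le_of_ble_eq_true ha
  have hb' : b ≤ 31 := Nat.le_of_ble_eq_true hb
  rw [sub_iff_aux a (by omega) b (by omega)]
  simp

/-- Decision trees. -/
inductive Tree where
  | r (a b c d : ℕ)
  | b (x y z p q w : ℕ)
  | n (v : ℕ) (t u : Tree)

/-- Membership in a list of masks. -/
def mem (a : ℕ) : List ℕ → Bool
  | [] => false
  | x :: l => Nat.beq x a || mem a l

theorem mem_sound {a : ℕ} {l : List ℕ} (h : mem a l = true) : a ∈ l := by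
  induction l with
  | nil => simp [mem] at h
  | cons x l ih =>
    simp only [mem, Bool.or_eq_true] at h
    rcases h with h | h
    · rw [Nat.eq_of_beq_eq_true h]; simp
    · exact List.mem_cons_of_mem _ (ih h)

/-- The checker: `R` and `B` are the masks known to be red and blue. -/
def check : Tree → List ℕ → List ℕ → Bool
  | .r a b c d, R, _ =>
    mem a R && mem b R && mem c R && mem d R && ok a && ok b && ok c && ok d &&
    sub a b && sub a c && sub b d && sub c d && !sub b c && !sub c b
  | .b x y z p q w, _, B =>
    mem x B && mem y B && mem z B && mem p B && mem q B && mem w B &&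
    ok x && ok y && ok z && ok p && ok q && ok w &&
    sub x p && sub y p && !sub z p && sub x q && !sub y q && sub z q &&
    !sub x w && sub y w && sub z w &&
    !sub x y && !sub x z && !sub y x && !sub y z && !sub z x && !sub z y &&
    !sub p q && !sub p w && !sub q p && !sub q w && !sub w p && !sub w q
  | .n v t u, R, B => check t (v :: R) B && check u R (v :: B)

theorem check_sound {c : Finset (Fin 5) → Bool}
    (hbot : c ∅ = false) (htop : c Finset.univ = false) (t : Tree) :
    ∀ R B : List ℕ, (∀ i ∈ R, c (toF i) = true) → (∀ i ∈ B, c (toF i) = false) →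
      check t R B = true → HasRedCopy 2 5 c ∨ HasBlueCopy 3 5 c := by
  induction t with
  | r a b c' d =>
    intro R B hR _ h
    simp only [check, Bool.and_eq_true, Bool.not_eq_true', ← Bool.not_eq_true] at h
    obtain ⟨⟨⟨⟨⟨⟨⟨⟨⟨⟨⟨⟨⟨ma, mb⟩, mc⟩, md⟩, oa⟩, ob⟩, oc⟩, od⟩, s1⟩, s2⟩, s3⟩, s4⟩, s5⟩, s6⟩ := h
    rw [sub_iff ‹_› ‹_›] at s1 s2 s3 s4 s5 s6
    exact Or.inl (red_of (hR _ (mem_sound ma)) (hR _ (mem_sound mb)) (hR _ (mem_sound mc))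
      (hR _ (mem_sound md)) s1 s2 s3 s4 s5 s6)
  | b x y z p q w =>
    intro R B _ hB h
    simp only [check, Bool.and_eq_true, Bool.not_eq_true', ← Bool.not_eq_true, and_assoc] at h
    obtain ⟨mx, my, mz, mp, mq, mw, ox, oy, oz, op, oq, ow, a1, a2, a3, a4, a5, a6, a7, a8, a9,
      i1, i2, i3, i4, i5, i6, j1, j2, j3, j4, j5, j6⟩ := h
    rw [sub_iff ‹_› ‹_›] at a1 a2 a3 a4 a5 a6 a7 a8 a9 i1 i2 i3 i4 i5 i6 j1 j2 j3 j4 j5 j6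
    exact Or.inr (blue_of hbot htop (hB _ (mem_sound mx)) (hB _ (mem_sound my))
      (hB _ (mem_sound mz)) (hB _ (mem_sound mp)) (hB _ (mem_sound mq)) (hB _ (mem_sound mw))
      a1 a2 a3 a4 a5 a6 a7 a8 a9 i1 i2 i3 i4 i5 i6 j1 j2 j3 j4 j5 j6)
  | n v t u iht ihu =>
    intro R B hR hB h
    simp only [check, Bool.and_eq_true] at h
    cases hv : c (toF v) with
    | true =>
      refine iht (v :: R) B ?_ hB h.1
      intro i hi
      rcases List.mem_cons.1 hi with rfl | hi
      · exact hv
      · exact hR i hi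
    | false =>
      refine ihu R (v :: B) hR ?_ h.2
      intro i hi
      rcases List.mem_cons.1 hi with rfl | hi
      · exact hv
      · exact hB i hi

open BoolRamsey.Tree in
/-- The decision tree. -/
def cert : Tree :=
  (n 23 (n 7 (n 22 (n 2 (r 2 7 22 23) (n 4 (r 4 7 22 23) (n 6 (r 6 7 22 23) (n 16 (n 21 (r 16 21
  22 23) (n 19 (r 16 19 22 23) (n 17 (r 16 17 22 23) (b 2 4 17 6 19 21)))) (n 21 (n 1 (r 1 7 21
  23) (n 5 (r 5 7 21 23) (n 19 (n 3 (r 3 7 19 23) (b 1 2 4 3 5 6)) (b 1 2 4 19 5 6)))) (n 19 (n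
  18 (r 18 19 22 23) (b 2 4 16 6 18 21)) (b 2 4 16 6 19 21))))))) (n 1 (n 21 (r 1 7 21 23) (n 19
  (r 1 7 19 23) (n 17 (r 1 17 7 23) (n 4 (n 20 (r 4 20 7 23) (n 2 (n 18 (r 2 18 7 23) (b 17 18
  20 19 21 22)) (b 2 17 20 19 22 21))) (n 2 (n 18 (r 2 18 7 23) (b 4 17 18 21 22 19)) (b 2 4 17
  22 19 21)))))) (n 4 (n 20 (r 4 20 7 23) (n 21 (r 4 7 21 23) (n 2 (n 18 (r 2 18 7 23) (n 19 (r
  2 7 19 23) (b 1 18 20 19 21 22))) (n 15 (n 27 (n 11 (n 3 (r 3 7 11 15) (b 1 2 20 3 21 22)) (b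
  1 2 20 11 21 22)) (b 1 2 20 27 21 22)) (b 1 2 20 15 21 22))))) (n 2 (n 18 (r 2 18 7 23) (n 19
  (r 2 7 19 23) (n 15 (n 29 (n 13 (n 5 (r 5 7 13 15) (b 1 4 18 5 19 22)) (b 1 4 18 13 19 22)) (b
  1 4 18 29 19 22)) (b 1 4 18 15 19 22)))) (n 21 (n 5 (r 5 7 21 23) (n 19 (n 3 (r 3 7 19 23) (b
  1 2 4 3 5 22)) (b 1 2 4 19 5 22))) (n 27 (n 19 (n 3 (r 3 7 19 23) (b 1 2 4 3 21 22)) (b 1 2 4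
  19 21 22)) (b 1 2 4 27 21 22))))))) (n 16 (n 22 (n 21 (r 16 21 22 23) (n 19 (r 16 19 22 23) (n
  17 (r 16 17 22 23) (n 4 (n 5 (r 4 5 22 23) (n 2 (n 3 (r 2 3 22 23) (b 3 5 17 7 19 21)) (b 2 5
  17 7 19 21))) (n 2 (n 3 (r 2 3 22 23) (b 3 4 17 7 19 21)) (b 2 4 17 7 19 21)))))) (n 18 (n 17
  (r 16 17 18 23) (n 20 (r 16 18 20 23) (n 21 (r 16 18 21 23) (n 2 (n 6 (r 2 6 18 23) (n 5 (n 1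
  (n 3 (r 2 3 18 23) (n 19 (r 1 5 19 23) (n 4 (n 27 (n 25 (r 16 18 25 27) (n 11 (r 2 18 11 27)
  (n 8 (n 9 (n 10 (r 8 9 10 27) (n 24 (r 8 9 24 27) (n 28 (n 30 (r 16 18 28 30) (b 3 6 10 7 11
  30)) (b 17 20 24 21 25 28)))) (b 3 9 17 11 19 25)) (b 3 8 17 11 19 25)))) (n 30 (n 14 (r 2 18
  14 30) (n 10 (r 2 10 18 30) (b 3 6 10 7 27 14))) (n 8 (n 10 (n 26 (r 2 10 18 26) (b 17 20 26
  21 27 30)) (b 3 6 10 7 27 30)) (b 3 6 8 7 27 30)))) (b 3 4 17 7 19 21)))) (b 1 6 20 7 21 22))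
  (b 5 6 20 7 21 22))) (n 1 (n 5 (n 19 (r 1 5 19 23) (b 2 17 20 19 22 21)) (b 2 5 20 7 22 21))
  (b 1 2 20 7 21 22)))))) (n 19 (n 21 (r 16 19 21 23) (n 20 (r 16 20 19 23) (n 27 (n 26 (r 16 19
  26 27) (n 24 (r 16 24 19 27) (n 29 (n 28 (n 25 (r 16 19 25 27) (n 17 (r 16 17 28 29) (n 30 (n
  1 (n 5 (r 1 5 19 23) (n 9 (r 1 9 19 27) (n 15 (n 13 (n 11 (r 1 11 19 27) (n 6 (n 2 (r 2 6 19
  23) (b 2 5 20 7 22 21)) (b 5 6 20 7 21 22))) (b 5 9 17 13 21 25)) (b 5 9 17 15 21 25)))) (n 2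
  (n 6 (r 2 6 19 23) (b 1 6 20 7 21 22)) (b 1 2 24 7 25 26))) (b 17 20 24 21 25 30)))) (b 18 20
  24 22 26 28)) (b 18 20 24 22 26 29)))) (n 1 (n 17 (n 5 (r 1 5 19 23) (n 6 (n 2 (r 2 6 19 23)
  (b 2 5 20 7 22 21)) (b 5 6 20 7 21 22))) (b 17 18 20 27 21 22)) (b 1 18 20 27 21 22))))) (n 1
  (n 3 (n 17 (r 1 3 17 23) (n 21 (r 1 3 21 23) (n 4 (n 20 (n 5 (r 4 5 20 23) (n 2 (n 6 (r 2 3 6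
  23) (n 15 (n 13 (r 1 3 13 15) (n 14 (r 2 3 14 15) (n 8 (n 12 (n 10 (r 2 3 10 15) (n 9 (r 8 9
  12 15) (n 25 (n 27 (r 1 3 25 27) (b 6 10 18 14 22 27)) (b 5 9 17 13 21 25)))) (b 5 6 12 7 13
  14)) (b 5 6 8 7 13 14)))) (n 27 (n 25 (r 1 3 25 27) (n 9 (r 1 3 9 27) (b 5 9 17 15 21 25))) (n
  8 (n 9 (n 11 (r 1 3 9 11) (b 5 11 17 15 21 27)) (b 5 9 17 15 21 27)) (b 6 8 18 15 22 27)))))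
  (b 2 5 17 7 19 21))) (b 17 18 20 19 21 22)) (b 4 17 18 21 22 19)))) (n 4 (n 6 (n 20 (r 4 6 20
  23) (n 5 (r 4 5 6 23) (n 21 (r 4 6 21 23) (n 17 (n 2 (n 15 (n 13 (r 4 6 13 15) (n 11 (r 2 6 11
  15) (n 8 (n 9 (n 10 (r 2 6 10 15) (n 12 (r 8 9 12 15) (n 26 (n 30 (r 2 6 26 30) (b 3 10 18 11
  19 30)) (b 3 10 18 11 19 26)))) (b 3 5 9 7 11 13)) (b 3 5 8 7 11 13)))) (n 30 (n 28 (r 4 6 28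
  30) (n 12 (r 4 6 12 30) (b 5 12 20 15 21 28))) (n 8 (n 12 (n 14 (r 4 6 12 14) (b 5 14 20 15 21
  30)) (b 3 12 18 15 19 30)) (b 5 8 20 15 21 30)))) (b 2 5 20 7 22 21)) (b 3 5 17 7 19 21)))))
  (b 3 6 18 7 19 22)) (b 3 4 18 7 19 22))) (n 4 (n 6 (n 20 (r 4 6 20 23) (n 21 (r 4 6 21 23) (b
  1 18 20 19 21 22))) (b 1 6 18 7 19 22)) (b 1 4 18 7 19 22)))))) (n 1 (n 3 (n 5 (r 1 3 5 23) (n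
  21 (r 1 3 21 23) (n 17 (r 1 3 17 23) (n 2 (n 6 (r 2 3 6 23) (n 22 (r 2 3 22 23) (b 5 6 16 7 21
  22))) (n 27 (n 19 (n 30 (n 26 (n 18 (r 18 19 26 27) (b 2 5 16 7 18 21)) (b 2 5 16 7 26 21)) (b
  2 5 16 7 30 21)) (b 2 5 16 7 19 21)) (b 2 5 16 7 27 21)))))) (n 19 (n 5 (r 1 5 19 23) (n 21 (r
  1 19 21 23) (n 27 (n 11 (r 1 11 19 27) (n 9 (r 1 9 19 27) (n 13 (n 29 (n 25 (r 1 13 25 29) (n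
  15 (n 17 (r 1 17 13 29) (n 2 (n 10 (r 2 10 19 27) (n 26 (r 2 19 26 27) (b 9 10 16 11 25 26)))
  (n 30 (n 22 (n 18 (r 18 19 22 23) (b 2 5 16 7 18 21)) (b 2 9 16 11 22 25)) (b 2 9 16 11 30
  25)))) (b 5 9 16 15 21 25))) (b 3 5 9 7 11 29)) (b 3 5 9 7 11 13)))) (b 3 5 16 7 27 21)))) (n
  4 (n 5 (n 6 (r 4 5 6 23) (n 22 (r 4 5 22 23) (b 3 6 16 7 19 22))) (n 21 (n 29 (n 13 (r 1 13 21
  29) (n 6 (r 4 6 21 23) (n 22 (r 4 21 22 23) (b 3 6 16 7 19 22)))) (b 3 5 16 7 19 29)) (b 3 5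
  16 7 19 21))) (n 29 (n 21 (n 30 (n 28 (n 20 (r 20 21 28 29) (b 3 4 16 7 19 20)) (b 3 4 16 7 19
  28)) (b 3 4 16 7 19 30)) (b 3 4 16 7 19 21)) (b 3 4 16 7 19 29))))) (n 2 (n 6 (n 3 (r 2 3 6
  23) (n 19 (r 2 6 19 23) (n 18 (r 2 6 18 23) (n 4 (n 5 (r 4 5 6 23) (n 21 (r 4 6 21 23) (b 3 5
  16 7 19 21))) (n 30 (n 22 (n 28 (n 20 (r 20 22 28 30) (b 1 4 16 7 19 20)) (b 1 4 16 7 19 28))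
  (b 1 4 18 7 19 22)) (b 1 4 16 7 19 30)))))) (n 22 (n 19 (r 2 19 22 23) (n 30 (n 14 (r 2 14 22
  30) (n 10 (r 2 10 22 30) (n 11 (n 27 (n 26 (r 2 11 26 27) (n 15 (n 3 (r 2 3 22 23) (n 18 (r 2
  18 11 27) (n 4 (n 12 (r 4 12 22 30) (n 28 (r 4 22 28 30) (b 10 12 16 14 26 28))) (n 28 (n 20
  (r 20 22 28 30) (b 3 4 16 7 19 20)) (b 4 10 16 14 28 26))))) (b 1 10 16 15 19 26))) (b 1 6 10
  7 27 14)) (b 1 6 10 7 11 14)))) (b 1 6 16 7 19 30))) (n 27 (n 19 (n 29 (n 25 (n 17 (r 17 19 25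
  27) (b 1 6 16 7 17 22)) (b 1 6 16 7 25 22)) (b 1 6 16 7 29 22)) (b 1 6 16 7 19 22)) (b 1 6 16
  7 27 22)))) (n 30 (n 22 (n 4 (n 21 (r 4 21 22 23) (n 26 (n 18 (r 18 22 26 30) (b 1 2 16 7 21
  18)) (b 1 2 16 7 21 26))) (n 20 (n 28 (r 20 22 28 30) (n 27 (n 26 (n 18 (r 18 22 26 30) (b 2 4
  16 7 18 28)) (b 2 4 16 7 26 28)) (b 2 4 16 7 27 28))) (n 27 (n 26 (n 18 (r 18 22 26 30) (b 2 4
  16 7 18 20)) (b 2 4 16 7 26 20)) (b 1 4 16 7 27 20)))) (n 29 (n 21 (n 25 (n 17 (r 17 21 25 29)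
  (b 1 2 16 7 17 22)) (b 1 2 16 7 25 22)) (b 1 2 16 7 21 22)) (b 1 2 16 7 29 22))) (n 29 (n 25
  (n 21 (n 17 (r 17 21 25 29) (b 1 2 16 7 17 30)) (b 1 2 16 7 21 30)) (b 1 2 16 7 25 30)) (b 1 2
  16 7 29 30))))))) (n 15 (n 8 (n 14 (n 11 (r 8 11 14 15) (n 13 (r 8 13 14 15) (n 9 (r 8 9 14
  15) (n 4 (n 5 (r 4 5 14 15) (n 2 (n 3 (r 2 3 14 15) (b 3 5 9 23 11 13)) (b 2 5 9 23 11 13)))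
  (n 2 (n 3 (r 2 3 14 15) (b 3 4 9 23 11 13)) (b 2 4 9 23 11 13)))))) (n 12 (n 10 (r 8 10 12 15)
  (n 9 (r 8 9 12 15) (n 11 (r 8 12 11 15) (n 4 (n 6 (r 4 6 12 15) (n 3 (n 1 (n 5 (r 1 3 5 15) (n
  13 (r 1 3 13 15) (n 2 (n 7 (r 4 12 7 15) (n 27 (n 26 (r 2 3 26 27) (n 18 (r 2 3 18 27) (b 6 10
  18 14 23 26))) (n 16 (n 17 (n 19 (r 1 3 17 19) (b 6 10 19 14 23 27)) (b 6 10 17 14 23 27)) (b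
  6 10 16 14 23 27)))) (b 2 5 9 23 11 13)))) (b 1 6 10 23 11 14)) (b 3 6 10 23 11 14))) (n 29 (n
  13 (n 1 (n 3 (r 1 3 13 15) (b 3 4 10 23 11 14)) (b 1 4 10 23 11 14)) (b 4 9 10 13 14 11)) (b 4
  9 10 29 14 11)))))) (n 13 (n 11 (r 8 11 13 15) (n 10 (r 8 10 13 15) (n 29 (n 28 (r 8 13 28 29)
  (n 24 (r 8 24 13 29) (n 27 (n 26 (n 25 (r 8 13 25 29) (n 9 (r 8 9 26 27) (n 30 (n 2 (n 3 (r 2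
  3 26 27) (n 6 (r 2 6 26 30) (b 3 6 10 23 11 14))) (n 16 (n 20 (r 16 20 26 30) (b 2 12 20 14 23
  28)) (b 2 12 16 14 23 28))) (b 9 10 24 11 25 30)))) (b 10 12 24 14 26 28)) (b 10 12 24 14 27
  28)))) (n 1 (n 9 (n 3 (r 1 3 13 15) (n 6 (n 4 (r 4 6 13 15) (b 3 4 10 23 11 14)) (b 3 6 10 23
  11 14))) (b 9 10 12 11 29 14)) (b 1 10 12 11 29 14))))) (n 1 (n 5 (n 9 (r 1 5 9 15) (n 11 (r 1
  5 11 15) (n 2 (n 10 (n 3 (r 1 3 5 15) (n 4 (n 6 (r 2 6 10 15) (n 7 (r 2 10 7 15) (n 29 (n 28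
  (r 4 5 28 29) (n 20 (r 4 5 20 29) (b 6 12 20 14 23 28))) (n 16 (n 17 (n 21 (r 1 5 17 21) (b 3
  9 21 11 23 29)) (b 3 9 17 11 23 29)) (b 3 9 16 11 23 29))))) (b 3 4 9 23 11 13))) (b 9 10 12
  11 13 14)) (b 2 9 12 11 14 13)))) (n 2 (n 6 (n 10 (r 2 6 10 15) (n 3 (r 2 3 6 15) (n 11 (r 2 6
  11 15) (n 9 (n 4 (n 7 (r 1 9 7 15) (n 30 (n 26 (r 2 6 26 30) (n 18 (r 2 6 18 30) (b 3 10 18 11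
  23 26))) (n 16 (n 18 (n 22 (r 2 6 18 22) (b 3 10 22 11 23 30)) (b 3 10 18 11 23 30)) (b 3 10
  16 11 23 30)))) (b 3 4 10 23 11 14)) (b 9 10 12 11 13 14))))) (b 5 6 12 23 13 14)) (b 2 5 12
  23 14 13))) (n 2 (n 6 (n 10 (r 2 6 10 15) (n 11 (r 2 6 11 15) (b 1 10 12 11 13 14))) (b 1 6 12
  23 13 14)) (b 1 2 12 23 13 14)))))) (n 2 (n 11 (n 7 (r 2 7 11 15) (n 6 (r 2 6 11 15) (n 14 (r
  2 11 14 15) (n 27 (n 26 (r 2 11 26 27) (n 18 (r 2 18 11 27) (b 6 8 18 14 23 26))) (n 1 (n 16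
  (n 3 (n 17 (n 19 (r 1 3 17 19) (b 6 8 19 14 23 27)) (b 6 8 17 14 23 27)) (b 3 6 8 23 27 14))
  (b 6 8 16 14 23 27)) (b 1 6 8 7 27 14)))))) (n 3 (n 10 (r 2 3 10 15) (n 14 (r 2 3 14 15) (n 6
  (r 2 3 6 15) (n 1 (n 5 (r 1 3 5 15) (n 13 (r 1 3 13 15) (b 5 6 8 23 13 14))) (b 1 6 10 23 11
  14))))) (n 30 (n 14 (n 26 (r 2 14 26 30) (n 18 (r 2 18 14 30) (b 3 8 18 11 23 26))) (n 4 (n 6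
  (n 5 (r 4 5 6 15) (n 13 (r 4 6 13 15) (b 3 5 8 23 11 13))) (b 3 6 8 23 11 14)) (b 3 4 8 23 11
  14))) (n 4 (n 6 (n 16 (n 20 (n 22 (r 4 6 20 22) (b 3 8 22 11 23 30)) (b 3 8 20 11 23 30)) (b 3
  8 16 11 23 30)) (b 3 6 8 23 11 30)) (b 3 4 8 23 11 30))))) (n 4 (n 5 (n 12 (r 4 5 12 15) (n 14
  (r 4 5 14 15) (n 6 (r 4 5 6 15) (n 1 (n 3 (r 1 3 5 15) (n 11 (r 1 5 11 15) (b 3 6 8 23 11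
  14))) (n 29 (n 13 (n 25 (n 9 (r 9 13 25 29) (b 1 2 8 23 9 14)) (b 1 6 8 23 25 14)) (b 1 6 8 23
  13 14)) (b 1 6 8 23 29 14)))))) (n 13 (n 14 (r 4 13 14 15) (n 29 (n 28 (r 4 13 28 29) (n 20 (r
  4 20 13 29) (b 2 8 20 14 23 28))) (b 2 5 8 23 14 29))) (n 30 (n 14 (n 27 (n 26 (n 10 (r 10 14
  26 30) (b 2 5 8 23 10 13)) (b 2 5 8 23 26 13)) (b 2 5 8 23 27 13)) (b 2 5 8 23 14 13)) (b 2 5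
  8 23 30 13)))) (n 27 (n 11 (n 1 (n 13 (r 1 11 13 15) (n 26 (n 10 (r 10 11 26 27) (b 2 4 8 23
  10 13)) (b 2 4 8 23 26 13))) (n 26 (n 10 (r 10 11 26 27) (n 25 (n 9 (r 9 11 25 27) (b 1 2 8 23
  9 10)) (b 1 2 8 23 25 10))) (n 29 (n 25 (n 9 (r 9 11 25 27) (b 1 2 8 23 9 26)) (b 1 2 8 23 25
  26)) (b 2 4 8 23 26 29)))) (n 29 (n 28 (n 13 (n 12 (r 12 13 28 29) (b 2 4 8 23 11 12)) (b 2 4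
  8 23 11 13)) (b 2 4 8 23 11 28)) (b 2 4 8 23 11 29))) (n 29 (n 13 (n 28 (n 12 (r 12 13 28 29)
  (b 2 4 8 23 27 12)) (b 2 4 8 23 27 28)) (b 2 4 8 23 27 13)) (b 2 4 8 23 27 29)))))) (n 30 (n
  16 (n 28 (n 26 (r 16 26 28 30) (n 18 (r 16 18 28 30) (n 22 (r 16 22 28 30) (n 8 (n 10 (r 8 10
  28 30) (n 4 (n 6 (r 4 6 28 30) (b 6 10 18 15 22 26)) (b 4 10 18 15 22 26))) (n 4 (n 6 (r 4 6
  28 30) (b 6 8 18 15 23 26)) (b 4 8 18 15 22 26)))))) (n 20 (n 24 (r 16 20 24 30) (n 26 (r 16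
  20 26 30) (n 18 (r 16 18 20 30) (n 4 (n 12 (r 4 12 20 30) (n 10 (n 2 (n 6 (r 4 6 20 30) (n 8
  (n 22 (r 2 10 22 30) (n 14 (r 4 20 14 30) (n 29 (n 25 (r 16 20 25 29) (n 17 (r 16 17 20 29) (b
  17 18 24 23 25 26))) (n 17 (n 21 (r 16 17 20 21) (b 6 12 21 15 23 29)) (b 6 12 17 14 23
  29))))) (b 6 8 18 15 23 26))) (b 2 12 24 15 26 28)) (b 10 12 24 15 26 28))) (b 4 18 24 23 28
  26))))) (n 8 (n 12 (n 24 (r 8 12 24 30) (n 26 (r 8 12 26 30) (n 2 (n 18 (n 10 (r 8 10 12 30)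
  (n 4 (n 6 (r 4 6 12 30) (n 14 (r 2 18 14 30) (n 22 (r 4 12 22 30) (n 29 (n 25 (r 8 12 25 29)
  (n 9 (r 8 9 12 29) (b 9 10 24 15 25 26))) (n 9 (n 13 (r 8 9 12 13) (b 6 13 20 15 23 29)) (b 6
  9 20 15 23 29)))))) (b 4 10 24 15 28 26))) (b 18 20 24 23 26 28)) (b 2 20 24 23 26 28)))) (n 2
  (n 6 (n 18 (r 2 6 18 30) (n 10 (r 2 6 10 30) (n 26 (r 2 6 26 30) (n 24 (n 3 (n 7 (r 2 3 6 7)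
  (b 7 12 20 15 23 28)) (b 3 12 20 15 23 28)) (b 18 20 24 23 26 28))))) (b 6 12 20 15 23 28)) (b
  2 12 20 15 23 28))) (n 2 (n 6 (n 18 (r 2 6 18 30) (n 26 (r 2 6 26 30) (b 8 18 20 26 28 23)))
  (b 6 8 20 15 23 28)) (b 2 8 20 15 23 28))))) (n 8 (n 12 (n 10 (r 8 10 12 30) (n 26 (r 8 12 26
  30) (n 4 (n 6 (r 4 6 12 30) (b 6 10 16 15 23 26)) (b 4 10 16 15 23 26)))) (n 28 (n 26 (r 8 26
  28 30) (n 10 (r 8 10 28 30) (n 29 (n 4 (n 6 (r 4 6 28 30) (b 6 10 16 15 23 26)) (b 4 10 16 15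
  23 26)) (b 10 12 16 15 26 29)))) (n 2 (n 6 (n 10 (r 2 6 10 30) (n 26 (r 2 6 26 30) (b 10 12 16
  15 26 28))) (b 6 12 16 15 23 28)) (b 2 12 16 15 23 28)))) (n 2 (n 6 (n 26 (r 2 6 26 30) (n 4
  (n 1 (n 5 (n 7 (r 4 5 6 7) (b 7 8 16 15 23 26)) (b 5 8 16 15 23 26)) (b 1 8 16 15 23 26)) (b 4
  8 16 15 23 26))) (n 27 (n 26 (n 29 (n 25 (n 24 (r 24 25 26 27) (b 6 8 16 15 23 24)) (b 6 8 16
  15 23 25)) (b 6 8 16 15 23 29)) (b 6 8 16 15 23 26)) (b 6 8 16 15 23 27))) (n 29 (n 28 (n 25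
  (n 24 (r 24 25 28 29) (b 2 8 16 15 23 24)) (b 2 8 16 15 23 25)) (b 2 8 16 15 23 28)) (b 2 8 16
  15 23 29))))) (n 1 (n 5 (n 29 (n 9 (r 1 5 9 29) (n 25 (r 1 5 25 29) (n 17 (r 1 5 17 29) (n 4
  (n 3 (n 7 (r 1 3 5 7) (b 7 9 17 15 23 25)) (b 3 9 17 15 23 25)) (b 4 9 17 15 23 25))))) (n 9
  (n 13 (r 1 5 9 13) (n 17 (n 27 (r 1 9 17 27) (n 25 (r 1 9 17 25) (n 3 (n 11 (r 1 3 9 11) (b 11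
  13 25 15 27 29)) (b 3 13 25 15 27 29)))) (n 3 (n 7 (r 1 3 5 7) (b 7 13 17 15 23 29)) (b 3 13
  17 15 23 29)))) (n 3 (n 7 (r 1 3 5 7) (n 17 (n 21 (r 1 5 17 21) (b 7 9 21 15 23 29)) (b 7 9 17
  15 23 29))) (n 16 (n 17 (n 21 (r 1 5 17 21) (b 3 9 21 15 23 29)) (b 3 9 17 15 23 29)) (b 3 9
  16 15 23 29))))) (n 16 (n 18 (n 20 (n 22 (r 16 18 20 22) (n 8 (n 12 (n 10 (n 14 (r 8 10 12 14)
  (b 5 14 22 15 23 30)) (b 5 10 22 15 23 30)) (b 5 12 22 15 23 30)) (b 5 8 22 15 23 30))) (n 8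
  (n 12 (n 10 (n 14 (r 8 10 12 14) (b 5 14 20 15 23 30)) (b 5 10 20 15 23 30)) (b 5 12 20 15 23
  30)) (b 5 8 20 15 23 30))) (n 8 (n 12 (n 10 (n 14 (r 8 10 12 14) (b 5 14 18 15 23 30)) (b 5 10
  18 15 23 30)) (b 5 12 18 15 23 30)) (b 5 8 18 15 23 30))) (n 8 (n 10 (n 12 (n 14 (r 8 10 12
  14) (b 5 14 16 15 23 30)) (b 5 12 16 15 23 30)) (b 5 10 16 15 23 30)) (b 5 8 16 15 23 30))))
  (n 16 (n 18 (n 27 (n 24 (r 16 18 24 27) (n 25 (r 16 18 25 27) (n 2 (n 10 (r 2 10 18 27) (b 1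
  10 24 15 25 30)) (b 1 2 24 15 25 30)))) (n 20 (n 22 (r 16 18 20 22) (n 24 (n 26 (r 16 18 24
  26) (b 1 22 26 23 27 30)) (b 1 22 24 23 27 30))) (n 8 (n 24 (n 26 (r 16 18 24 26) (b 1 20 26
  23 27 30)) (b 1 20 24 23 27 30)) (b 1 8 20 15 23 30)))) (n 8 (n 12 (n 10 (n 14 (r 8 10 12 14)
  (b 1 14 18 15 23 30)) (b 1 10 18 15 23 30)) (b 1 12 18 15 23 30)) (b 1 8 18 15 23 30))) (n 8
  (n 10 (n 12 (n 14 (r 8 10 12 14) (b 1 14 16 15 23 30)) (b 1 12 16 15 23 30)) (b 1 10 16 15 23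
  30)) (b 1 8 16 15 23 30)))))))

set_option maxRecDepth 100000 in
theorem cert_ok : check cert [] [] = true := by decide +kernel

end BoolRamsey

/-- every 2-coloring of Q_5 with both ∅ and [5] blue contains a red copy of
Q_2 or a blue copy of Q_3. -/
theorem Q5_blue_bottom_blue_top (c : Finset (Fin 5) → Bool)
    (hbot : c ∅ = false) (htop : c Finset.univ = false) :
    HasRedCopy 2 5 c ∨ HasBlueCopy 3 5 c := by
  exact BoolRamsey.check_sound hbot htop BoolRamsey.cert [] [] (by simp) (by simp)
    BoolRamsey.cert_ok
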